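/- Let (a_n) be a sequence of complex numbers with Σ |a_n| < ∞, a_1 ≠ 0, and suppose the Dirichlet series f(s) = Σ_{n=1}^∞ a_n n^{-s} satisfies |f(s)| ≥ δ > 0 for all s with Re(s) ≥ 0. Then there exists a sequence (b_n) with Σ |b_n| < ∞ such that 1/f(s) = Σ_{n=1}^∞ b_n n^{-s} for all s with Re(s) ≥ 0. -/

import Mathlib

/-!
Let `𝒜` be the Banach algebra of summable arithmetic functions under Dirichlet convolution. Taking
mean values over the imaginary axis bounds every coefficient of `f ∈ 𝒜` by
`sup_t |f(it)|`. If `f` is supported on the divisors of `q`, then `f ^ k` is supported on the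
divisors of `q ^ k`, whose number is polynomial in `k`; hence `‖f ^ k‖` grows at most like
`k ^ m * (sup_t |f(it)|) ^ k`, and so `|φ f| ≤ sup_t |f(it)|` for every character `φ` of `𝒜`. Such
`f` are dense, which extends the estimate to all of `𝒜`. Applied to an inverse it shows that a unit
`f` with `|f(it)| ≥ ε` stays a unit under perturbations of norm less than `ε`. A uniform lower bound
on the half-plane passes to the translates of `f` to the right, and these form a path from `f` to
its leading coefficient along which invertibility is therefore both an open and a closed condition.
-/

noncomputable section

open Filter Topology LSeries Metric
open Complex (I)

lemma le_of_forall_pow_le_mul_pow {x M C : ℝ} {m : ℕ} (hM : 0 ≤ M)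
    (h : ∀ k : ℕ, k ≠ 0 → x ^ k ≤ C * k ^ m * M ^ k) : x ≤ M := by
  by_contra! hlt
  have hx : 0 < x := hM.trans_lt hlt
  have hlim : Tendsto (fun k : ℕ ↦ C * ((k : ℝ) ^ m * (M / x) ^ k)) atTop (𝓝 0) := by
    simpa using (tendsto_pow_const_mul_const_pow_of_lt_one m (div_nonneg hM hx.le)
      ((div_lt_one hx).mpr hlt)).const_mul C
  obtain ⟨k, hk1, hk0⟩ :=
    ((hlim.eventually_lt_const one_pos).and (eventually_ne_atTop 0)).exists
  rw [← mul_assoc, div_pow, ← mul_div_assoc, div_lt_one (pow_pos hx k)] at hk1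
  exact (h k hk0).not_gt hk1

lemma card_divisors_pow_le {q : ℕ} (hq : q ≠ 0) {k : ℕ} (hk : k ≠ 0) :
    (q ^ k).divisors.card ≤ q.divisors.card * k ^ q.primeFactors.card := by
  rw [Nat.card_divisors (pow_ne_zero k hq), Nat.card_divisors hq, Nat.primeFactors_pow q hk,
    ← Finset.prod_const, ← Finset.prod_mul_distrib]
  refine Finset.prod_le_prod' fun p _ ↦ ?_
  simp only [Nat.factorization_pow, Finsupp.smul_apply, smul_eq_mul]
  nlinarith [Nat.one_le_iff_ne_zero.mpr hk]

lemma dvd_pow_of_pow_apply_ne_zero {R : Type*} [Semiring R] {f : ArithmeticFunction R} {q : ℕ}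
    (hf : ∀ n, f n ≠ 0 → n ∣ q) (k : ℕ) : ∀ n, (f ^ k) n ≠ 0 → n ∣ q ^ k := by
  induction k with
  | zero =>
    intro n hn
    by_contra h
    exact hn (ArithmeticFunction.one_apply_ne (by simpa using h))
  | succ k ih =>
    intro n hn
    rw [pow_succ, ArithmeticFunction.mul_apply] at hn
    obtain ⟨p, hp, hne⟩ := Finset.exists_ne_zero_of_sum_ne_zero hn
    rw [← (Nat.mem_divisorsAntidiagonal.mp hp).1, pow_succ]
    exact mul_dvd_mul (ih _ (left_ne_zero_of_mul hne)) (hf _ (right_ne_zero_of_mul hne))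

lemma norm_intervalAverage_le {E : Type*} [NormedAddCommGroup E] [NormedSpace ℝ E] {f : ℝ → E}
    {M : ℝ} (hf : ∀ t, ‖f t‖ ≤ M) {a b : ℝ} (hab : a ≠ b) : ‖⨍ t in a..b, f t‖ ≤ M := by
  rw [interval_average_eq, norm_smul, norm_inv, Real.norm_eq_abs,
    inv_mul_le_iff₀ (abs_pos.mpr (sub_ne_zero.mpr hab.symm)), mul_comm]
  exact intervalIntegral.norm_integral_le_of_norm_le_const fun t _ ↦ hf t

lemma tendsto_intervalAverage_cexp (ω : ℝ) :
    Tendsto (fun T : ℝ ↦ ⨍ t in (0 : ℝ)..T, Complex.exp (ω * I * t)) atTop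
      (𝓝 (if ω = 0 then 1 else 0)) := by
  split_ifs with hω
  · refine tendsto_const_nhds.congr' ?_
    filter_upwards [eventually_ne_atTop 0] with T hT
    simp [interval_average_eq, hω, hT]
  · have hωI : (ω * I : ℂ) ≠ 0 := mul_ne_zero (Complex.ofReal_ne_zero.mpr hω) Complex.I_ne_zero
    refine squeeze_zero_norm (a := fun T : ℝ ↦ |T|⁻¹ * (2 / |ω|)) (fun T ↦ ?_) ?_
    · have hnum : ‖Complex.exp (ω * I * T) - 1‖ ≤ 2 := by
        refine (norm_sub_le _ _).trans_eq ?_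
        norm_num [mul_right_comm _ I, ← Complex.ofReal_mul]
      rw [interval_average_eq, integral_exp_mul_complex hωI, norm_smul, norm_div, sub_zero]
      simpa using by gcongr
    · simpa using (tendsto_inv_atTop_zero.comp tendsto_abs_atTop_atTop).mul_const (2 / |ω|)

lemma tendsto_intervalAverage_tsum_cexp {ι : Type*} [Countable ι] {c : ι → ℂ}
    (hc : Summable fun i ↦ ‖c i‖) (ω : ι → ℝ) :
    Tendsto (fun T : ℝ ↦ ⨍ t in (0 : ℝ)..T, ∑' i, c i * Complex.exp (ω i * I * t)) atTop
      (𝓝 (∑' i, c i * if ω i = 0 then 1 else 0)) := by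
  have hexp (i : ι) (t : ℝ) : ‖Complex.exp (ω i * I * t)‖ = 1 := by
    rw [mul_right_comm, ← Complex.ofReal_mul, Complex.norm_exp_ofReal_mul_I]
  have hswap (T : ℝ) : ⨍ t in (0 : ℝ)..T, ∑' i, c i * Complex.exp (ω i * I * t) =
      ∑' i, c i * ⨍ t in (0 : ℝ)..T, Complex.exp (ω i * I * t) := by
    have hsum := intervalIntegral.hasSum_integral_of_dominated_convergence
      (μ := MeasureTheory.volume) (a := 0) (b := T)
      (F := fun i t ↦ c i * Complex.exp (ω i * I * t)) (fun i _ ↦ ‖c i‖)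
      (fun i ↦ by fun_prop) (fun i ↦ .of_forall fun t _ ↦ by rw [norm_mul, hexp, mul_one])
      (.of_forall fun _ _ ↦ hc) intervalIntegrable_const
      (.of_forall fun t _ ↦ (Summable.of_norm (by simpa [hexp] using hc)).hasSum)
    simp only [interval_average_eq, ← hsum.tsum_eq, intervalIntegral.integral_const_mul,
      ← tsum_const_smul'', mul_smul_comm]
  simp only [hswap]
  refine tendsto_tsum_of_dominated_convergence hc
    (fun i ↦ (tendsto_intervalAverage_cexp (ω i)).const_mul _) ?_
  filter_upwards [eventually_gt_atTop 0] with T hT i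
  rw [norm_mul]
  exact mul_le_of_le_one_right (norm_nonneg _)
    (norm_intervalAverage_le (fun t ↦ (hexp i t).le) hT.ne)

lemma norm_apply_le_of_norm_tsum_cexp_le {ι : Type*} [Countable ι] {c : ι → ℂ}
    (hc : Summable fun i ↦ ‖c i‖) {ω : ι → ℝ} (hω : Function.Injective ω) {M : ℝ}
    (hM : ∀ t : ℝ, ‖∑' i, c i * Complex.exp (ω i * I * t)‖ ≤ M) (j : ι) : ‖c j‖ ≤ M := by
  -- Multiplying by `exp (-ω j * I * t)` turns the `j`-th coefficient into the mean value.
  have hmod (t : ℝ) : ∑' i, c i * Complex.exp ((ω i - ω j : ℝ) * I * t) =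
      (∑' i, c i * Complex.exp (ω i * I * t)) * Complex.exp ((-ω j * t : ℝ) * I) := by
    rw [← tsum_mul_right]
    refine tsum_congr fun i ↦ ?_
    rw [mul_assoc (c i), ← Complex.exp_add]
    push_cast
    ring_nf
  have hlim := (tendsto_intervalAverage_tsum_cexp hc fun i ↦ ω i - ω j).norm
  rw [tsum_eq_single j fun i hij ↦ by rw [if_neg (sub_ne_zero.mpr (hω.ne hij)), mul_zero],
    if_pos (sub_self _), mul_one] at hlim
  refine le_of_tendsto hlim ?_
  filter_upwards [eventually_gt_atTop 0] with T hT
  refine norm_intervalAverage_le (fun t ↦ ?_) hT.ne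
  rw [hmod, norm_mul, Complex.norm_exp_ofReal_mul_I, mul_one]
  exact hM t

lemma lseriesHasSum_zero_iff {f : ℕ → ℂ} (hf : f 0 = 0) {a : ℂ} :
    LSeriesHasSum f 0 a ↔ HasSum f a := by
  have hterm : term f 0 = f := by
    ext n
    simp [term_def₀ hf]
  rw [LSeriesHasSum, hterm]

lemma lseriesSummable_zero_iff {f : ℕ → ℂ} (hf : f 0 = 0) : LSeriesSummable f 0 ↔ Summable f :=
  ⟨fun h ↦ ((lseriesHasSum_zero_iff hf).mp h.LSeriesHasSum).summable,
    fun h ↦ ((lseriesHasSum_zero_iff hf).mpr h.hasSum).LSeriesSummable⟩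

lemma tsum_div_succ_cpow_eq_lseries (f : ℕ → ℂ) (s : ℂ) :
    ∑' n : ℕ, f (n + 1) / ((n : ℂ) + 1) ^ s = LSeries f s := by
  have hsupp : Function.support (term f s) ⊆ Set.range Nat.succ := by
    rintro (_ | n) hn
    · exact absurd (term_zero f s) hn
    · exact ⟨n, rfl⟩
  rw [LSeries, ← Nat.succ_injective.tsum_eq hsupp]
  refine tsum_congr fun n ↦ ?_
  simp [term_of_ne_zero]

/-- The convolution algebra of absolutely summable arithmetic functions, that is, the algebra of
Dirichlet series converging absolutely on the closed right half-plane. -/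
def summableArithmeticFunction : Subalgebra ℂ (ArithmeticFunction ℂ) where
  carrier := {f | Summable f}
  mul_mem' {f g} hf hg := by
    refine (lseriesSummable_zero_iff (f * g).map_zero).mp ?_
    exact ArithmeticFunction.LSeriesSummable_mul ((lseriesSummable_zero_iff f.map_zero).mpr hf)
      ((lseriesSummable_zero_iff g.map_zero).mpr hg)
  add_mem' hf hg := hf.add hg
  algebraMap_mem' c := by
    refine summable_of_ne_finset_zero (s := {1}) fun n hn ↦ ?_
    rw [Algebra.algebraMap_eq_smul_one, ArithmeticFunction.smul_map,
      ArithmeticFunction.one_apply_ne (by simpa using hn), smul_zero]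

namespace summableArithmeticFunction

local notation "𝒜" => summableArithmeticFunction

lemma summable_norm (f : 𝒜) : Summable fun n ↦ ‖f.1 n‖ := Summable.norm f.2

lemma lseriesSummable (f : 𝒜) {s : ℂ} (hs : 0 ≤ s.re) : LSeriesSummable f.1 s :=
  .of_re_le_re (by simpa using hs) ((lseriesSummable_zero_iff f.1.map_zero).mpr f.2)

/-- The inclusion into the Banach space `ℓ¹`, through which the algebra acquires its norm. -/
def toLp : 𝒜 →ₗ[ℂ] lp (fun _ : ℕ ↦ ℂ) 1 where
  toFun f := ⟨fun n ↦ f.1 n, memℓp_gen (by simpa using summable_norm f)⟩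
  map_add' _ _ := rfl
  map_smul' _ _ := rfl

lemma toLp_injective : Function.Injective toLp := fun _ _ h ↦
  Subtype.ext <| ArithmeticFunction.ext fun n ↦ congrArg (fun x ↦ x n) h

instance : NormedAddCommGroup 𝒜 := .induced _ _ toLp toLp_injective

lemma isometry_toLp : Isometry toLp := AddMonoidHomClass.isometry_of_norm toLp fun _ ↦ rfl

lemma norm_eq_tsum (f : 𝒜) : ‖f‖ = ∑' n, ‖f.1 n‖ := by
  change ‖toLp f‖ = _
  rw [lp.norm_eq_tsum_rpow (by simp)]
  simp only [ENNReal.toReal_one, Real.rpow_one, div_one]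
  rfl

lemma norm_mul_le (f g : 𝒜) : ‖f * g‖ ≤ ‖f‖ * ‖g‖ := by
  have hnorm (h : 𝒜) : LSeriesHasSum (fun n ↦ (‖h.1 n‖ : ℂ)) 0 (‖h‖ : ℂ) := by
    rw [lseriesHasSum_zero_iff (by simp), norm_eq_tsum, Complex.hasSum_ofReal]
    exact (summable_norm h).hasSum
  have hconv : HasSum (fun n : ℕ ↦ ∑ p ∈ n.divisorsAntidiagonal, ‖f.1 p.1‖ * ‖g.1 p.2‖)
      (‖f‖ * ‖g‖) := by
    have := (lseriesHasSum_zero_iff (convolution_map_zero _ _)).mp ((hnorm f).convolution (hnorm g))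
    rw [convolution_def] at this
    exact_mod_cast this
  rw [norm_eq_tsum (f * g)]
  refine (Summable.tsum_le_tsum (fun n ↦ ?_) (summable_norm (f * g)) hconv.summable).trans_eq
    hconv.tsum_eq
  change ‖(f.1 * g.1) n‖ ≤ _
  rw [ArithmeticFunction.mul_apply]
  exact norm_sum_le_of_le _ fun p _ ↦ _root_.norm_mul_le _ _

instance : NormedCommRing 𝒜 where
  __ := (inferInstance : CommRing 𝒜)
  __ := (inferInstance : NormedAddCommGroup 𝒜)
  norm_mul_le := norm_mul_le

instance : NormedAlgebra ℂ 𝒜 where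
  __ := (inferInstance : Algebra ℂ 𝒜)
  norm_smul_le c f := (norm_smul_le c (toLp f) :)

instance : NormOneClass 𝒜 where
  norm_one := by
    rw [norm_eq_tsum, tsum_eq_single 1 fun n hn ↦ ?_]
    · simp
    · simp [ArithmeticFunction.one_apply_ne hn]

lemma range_toLp : Set.range toLp = {x | x 0 = 0} := by
  ext x
  constructor
  · rintro ⟨f, rfl⟩
    exact f.1.map_zero
  · intro hx
    have hsum : Summable fun n ↦ x n := .of_norm (by simpa using (lp.memℓp x).summable (by simp))
    exact ⟨⟨⟨fun n ↦ x n, hx⟩, hsum⟩, rfl⟩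

instance : CompleteSpace 𝒜 := by
  rw [completeSpace_iff_isComplete_range isometry_toLp.isUniformInducing, range_toLp]
  exact (isClosed_singleton.preimage (lp.evalCLM ℂ (fun _ : ℕ ↦ ℂ) 1 0).continuous).isComplete

/-- Evaluation of the Dirichlet series at a point of the closed right half-plane, a character of
the convolution algebra. -/
def lseriesHom (s : ℂ) (hs : 0 ≤ s.re) : 𝒜 →ₐ[ℂ] ℂ :=
  .ofLinearMap
    { toFun f := LSeries f.1 s
      map_add' f g := LSeries_add (lseriesSummable f hs) (lseriesSummable g hs)
      map_smul' c f := LSeries_smul f.1 c s }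
    ((congrArg (LSeries · s) ArithmeticFunction.one_eq_delta).trans (congrFun LSeries_delta s))
    fun f g ↦ ArithmeticFunction.LSeries_mul' (lseriesSummable f hs) (lseriesSummable g hs)

lemma lseriesHom_apply {s : ℂ} (hs : 0 ≤ s.re) (f : 𝒜) : lseriesHom s hs f = LSeries f.1 s := rfl


lemma norm_apply_le_of_norm_lseries_le (f : 𝒜) {M : ℝ}
    (hM : ∀ t : ℝ, ‖LSeries f.1 (t * I)‖ ≤ M) (n : ℕ) : ‖f.1 n‖ ≤ M := by
  rcases n with _ | n
  · simpa using (norm_nonneg _).trans (hM 0)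
  · have hω : Function.Injective fun n : ℕ ↦ -Real.log (n + 1) := fun m n h ↦ by
      simpa using Real.log_injOn_pos (Set.mem_Ioi.mpr m.cast_add_one_pos)
        (Set.mem_Ioi.mpr n.cast_add_one_pos) (neg_injective h)
    refine norm_apply_le_of_norm_tsum_cexp_le (c := fun n ↦ f.1 (n + 1))
      ((summable_nat_add_iff 1).mpr (summable_norm f)) hω (fun t ↦ ?_) n
    convert hM t using 2
    rw [← tsum_div_succ_cpow_eq_lseries]
    refine tsum_congr fun n ↦ ?_
    rw [div_eq_mul_inv, ← Complex.cpow_neg, Complex.cpow_def_of_ne_zero n.cast_add_one_ne_zero,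
      Complex.ofReal_neg, Complex.ofReal_log n.cast_add_one_pos.le]
    push_cast
    ring_nf

lemma norm_le_card_divisors_mul {f : 𝒜} {q : ℕ} (hq : q ≠ 0) (hf : ∀ n, f.1 n ≠ 0 → n ∣ q)
    {M : ℝ} (hM : ∀ t : ℝ, ‖LSeries f.1 (t * I)‖ ≤ M) : ‖f‖ ≤ q.divisors.card * M := by
  rw [norm_eq_tsum, tsum_eq_sum (s := q.divisors) fun n hn ↦ ?_, ← nsmul_eq_mul]
  · exact Finset.sum_le_card_nsmul _ _ _ fun n _ ↦ norm_apply_le_of_norm_lseries_le f hM n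
  · by_contra h
    exact hn (Nat.mem_divisors.mpr ⟨hf n (norm_ne_zero_iff.mp h), hq⟩)

lemma norm_algHom_apply_le_of_dvd (φ : 𝒜 →ₐ[ℂ] ℂ) {f : 𝒜} {q : ℕ} (hq : q ≠ 0)
    (hf : ∀ n, f.1 n ≠ 0 → n ∣ q) {M : ℝ} (hM : ∀ t : ℝ, ‖LSeries f.1 (t * I)‖ ≤ M) :
    ‖φ f‖ ≤ M := by
  have hM0 : 0 ≤ M := (norm_nonneg _).trans (hM 0)
  refine le_of_forall_pow_le_mul_pow (C := q.divisors.card) (m := q.primeFactors.card) hM0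
    fun k hk ↦ ?_
  have hpow (t : ℝ) : ‖LSeries (f ^ k).1 (t * I)‖ ≤ M ^ k := by
    rw [← lseriesHom_apply (by simp), map_pow, norm_pow]
    exact pow_le_pow_left₀ (norm_nonneg _) (hM t) k
  calc ‖φ f‖ ^ k = ‖φ (f ^ k)‖ := by rw [map_pow, norm_pow]
    _ ≤ ‖f ^ k‖ := AlgHom.norm_apply_le_self φ _
    _ ≤ (q ^ k).divisors.card * M ^ k :=
      norm_le_card_divisors_mul (pow_ne_zero k hq) (dvd_pow_of_pow_apply_ne_zero hf k) hpow
    _ ≤ q.divisors.card * k ^ q.primeFactors.card * M ^ k := by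
      gcongr
      exact_mod_cast card_divisors_pow_le hq hk

/-- The pointwise product of `f` with weights of modulus at most one. The weights carry the
product topology. -/
def weighted (f : 𝒜) (w : ℕ → closedBall (0 : ℂ) 1) : 𝒜 :=
  ⟨⟨fun n ↦ f.1 n * w n, by simp⟩, .of_norm_bounded (summable_norm f) fun n ↦ by
    simpa using mul_le_of_le_one_right (norm_nonneg _) (mem_closedBall_zero_iff.mp (w n).2)⟩

lemma weighted_apply (f : 𝒜) (w : ℕ → closedBall (0 : ℂ) 1) (n : ℕ) :
    (weighted f w).1 n = f.1 n * w n := rfl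

lemma continuous_weighted (f : 𝒜) : Continuous (weighted f) := by
  refine continuous_iff_continuousAt.mpr fun w ↦ tendsto_iff_norm_sub_tendsto_zero.mpr ?_
  have hnorm (v : ℕ → closedBall (0 : ℂ) 1) :
      ‖weighted f v - weighted f w‖ = ∑' n, ‖f.1 n * ((v n : ℂ) - w n)‖ := by
    simp only [norm_eq_tsum, mul_sub]
    rfl
  have hcont : Continuous fun v ↦ ‖weighted f v - weighted f w‖ := by
    simp only [hnorm]
    refine continuous_tsum (fun n ↦ by fun_prop) ((summable_norm f).mul_right 2) fun n v ↦ ?_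
    have hdiff : ‖(v n : ℂ) - w n‖ ≤ 2 :=
      (norm_sub_le_of_le (mem_closedBall_zero_iff.mp (v n).2)
        (mem_closedBall_zero_iff.mp (w n).2)).trans_eq one_add_one_eq_two
    rw [norm_norm, norm_mul]
    gcongr
  simpa using hcont.tendsto w

/-- The part of `f` supported on the divisors of `q`. -/
def divisorPart (f : 𝒜) (q : ℕ) : 𝒜 :=
  weighted f fun n ↦ ⟨if n ∣ q then 1 else 0, by split_ifs <;> simp⟩

lemma dvd_of_divisorPart_apply_ne_zero (f : 𝒜) (q n : ℕ) (h : (divisorPart f q).1 n ≠ 0) :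
    n ∣ q := by
  by_contra hn
  exact h (by simp [divisorPart, weighted_apply, hn])

lemma tendsto_divisorPart_factorial (f : 𝒜) :
    Tendsto (fun N : ℕ ↦ divisorPart f N.factorial) atTop (𝓝 f) := by
  have hf : weighted f (fun n ↦ ⟨if n = 0 then 0 else 1, by split_ifs <;> simp⟩) = f :=
    Subtype.ext <| ArithmeticFunction.ext fun n ↦ by
      rcases eq_or_ne n 0 with rfl | hn
      · simp
      · simp [weighted_apply, hn]
  nth_rw 2 [← hf]
  refine ((continuous_weighted f).tendsto _).comp (tendsto_pi_nhds.mpr fun n ↦ ?_)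
  refine tendsto_const_nhds.congr' ?_
  filter_upwards [eventually_ge_atTop n] with N hN
  rcases eq_or_ne n 0 with rfl | hn
  · simp [N.factorial_ne_zero]
  · simp [hn, Nat.dvd_factorial (Nat.pos_of_ne_zero hn) hN]

lemma norm_algHom_apply_le (φ : 𝒜 →ₐ[ℂ] ℂ) (f : 𝒜) {M : ℝ}
    (hM : ∀ t : ℝ, ‖LSeries f.1 (t * I)‖ ≤ M) : ‖φ f‖ ≤ M := by
  have hpart (N : ℕ) :
      ‖φ (divisorPart f N.factorial)‖ ≤ M + ‖divisorPart f N.factorial - f‖ := by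
    refine norm_algHom_apply_le_of_dvd φ N.factorial_ne_zero
      (dvd_of_divisorPart_apply_ne_zero f _) fun t ↦ ?_
    have ht : 0 ≤ (t * I : ℂ).re := by simp
    rw [← lseriesHom_apply ht, ← add_sub_cancel f (divisorPart f N.factorial), map_add,
      add_sub_cancel_left]
    exact norm_add_le_of_le (hM t) (AlgHom.norm_apply_le_self _ _)
  have hlim := tendsto_divisorPart_factorial f
  refine le_of_tendsto_of_tendsto' (((map_continuous φ).tendsto f).comp hlim).norm ?_ hpart
  simpa using (tendsto_iff_norm_sub_tendsto_zero.mp hlim).const_add M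

lemma isUnit_of_norm_sub_lt {f g : 𝒜} (hf : IsUnit f) {ε : ℝ} (hε : 0 < ε)
    (hlow : ∀ t : ℝ, ε ≤ ‖LSeries f.1 (t * I)‖) (hfg : ‖f - g‖ < ε) : IsUnit g := by
  obtain ⟨b, hb⟩ := hf.exists_right_inv
  have hmul (φ : 𝒜 →ₐ[ℂ] ℂ) : ‖φ f‖ * ‖φ b‖ = 1 := by
    rw [← norm_mul, ← map_mul, hb, map_one, norm_one]
  have hb_le (t : ℝ) : ‖LSeries b.1 (t * I)‖ ≤ ε⁻¹ := by
    have ht : 0 ≤ (t * I : ℂ).re := by simp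
    rw [← lseriesHom_apply ht, eq_inv_of_mul_eq_one_right (hmul (lseriesHom _ ht))]
    exact inv_anti₀ hε (hlow t)
  by_contra hg
  obtain ⟨χ, hχ⟩ := WeakDual.CharacterSpace.exists_apply_eq_zero hg
  let φ : 𝒜 →ₐ[ℂ] ℂ := WeakDual.CharacterSpace.toAlgHom χ
  have hφ : φ g = 0 := hχ
  have hf_le : ‖φ f‖ ≤ ‖f - g‖ := by
    simpa [hφ] using AlgHom.norm_apply_le_self φ (f - g)
  have : 1 < (1 : ℝ) := calc
    1 = ‖φ f‖ * ‖φ b‖ := (hmul φ).symm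
    _ ≤ ‖f - g‖ * ε⁻¹ := by
      gcongr
      exact norm_algHom_apply_le φ b hb_le
    _ < ε * ε⁻¹ := by gcongr
    _ = 1 := mul_inv_cancel₀ hε.ne'
  exact this.false

/-- The path `x ↦ (n ↦ f n * x ^ log n)`, whose Dirichlet series for `x > 0` is that of `f`
translated by `-log x`; writing translations this way closes the path up at `x = 0`, where
`0 ^ log 1 = 1` leaves only the leading coefficient. -/
def dilation (f : 𝒜) (x : unitInterval) : 𝒜 :=
  weighted f fun n ↦ ⟨((x : ℝ) ^ Real.log n : ℝ), by
    simpa [abs_of_nonneg (Real.rpow_nonneg x.2.1 _)] using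
      Real.rpow_le_one x.2.1 x.2.2 (Real.log_natCast_nonneg n)⟩

lemma dilation_apply (f : 𝒜) (x : unitInterval) (n : ℕ) :
    (dilation f x).1 n = f.1 n * ((x : ℝ) ^ Real.log n : ℝ) := rfl

lemma continuous_dilation (f : 𝒜) : Continuous (dilation f) :=
  (continuous_weighted f).comp <| continuous_pi fun n ↦ .subtype_mk
    (Complex.continuous_ofReal.comp <|
      (Real.continuous_rpow_const (Real.log_natCast_nonneg n)).comp continuous_subtype_val) _

lemma dilation_one (f : 𝒜) : dilation f 1 = f :=
  Subtype.ext <| ArithmeticFunction.ext fun n ↦ by simp [dilation_apply]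

lemma dilation_zero (f : 𝒜) : dilation f 0 = algebraMap ℂ 𝒜 (f.1 1) := by
  refine Subtype.ext <| ArithmeticFunction.ext fun n ↦ ?_
  rw [Algebra.algebraMap_eq_smul_one]
  change f.1 n * ((0 : ℝ) ^ Real.log n : ℝ) = f.1 1 * (1 : ArithmeticFunction ℂ) n
  rcases n with _ | _ | n
  · simp
  · simp
  · have hlog : Real.log (n + 2 : ℕ) ≠ 0 := (Real.log_pos (by norm_cast; omega)).ne'
    rw [Real.zero_rpow hlog, ArithmeticFunction.one_apply_ne (by omega)]
    simp

lemma lseries_dilation (f : 𝒜) {x : unitInterval} (hx : 0 < x) (s : ℂ) :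
    LSeries (dilation f x).1 s = LSeries f.1 (s - Real.log x) := by
  refine tsum_congr fun n ↦ ?_
  rcases eq_or_ne n 0 with rfl | hn
  · simp
  have hn' : (n : ℂ) ≠ 0 := Nat.cast_ne_zero.mpr hn
  rw [term_of_ne_zero hn, term_of_ne_zero hn, dilation_apply, Complex.cpow_sub _ _ hn',
    div_div_eq_mul_div, Real.rpow_def_of_pos hx, Complex.cpow_def_of_ne_zero hn' (Real.log x),
    ← Complex.natCast_log]
  push_cast
  rw [mul_comm (Real.log x : ℂ)]

lemma le_norm_lseries_dilation (f : 𝒜) {ε : ℝ} (hlow : ∀ s : ℂ, 0 ≤ s.re → ε ≤ ‖LSeries f.1 s‖)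
    (x : unitInterval) (t : ℝ) : ε ≤ ‖LSeries (dilation f x).1 (t * I)‖ := by
  have ht : 0 ≤ (t * I : ℂ).re := by simp
  have hclosed : IsClosed {x | ε ≤ ‖lseriesHom (t * I) ht (dilation f x)‖} :=
    isClosed_le continuous_const ((map_continuous _).comp (continuous_dilation f)).norm
  have hpos : {0}ᶜ ⊆ {x | ε ≤ ‖lseriesHom (t * I) ht (dilation f x)‖} := fun x hx ↦ by
    change ε ≤ ‖LSeries (dilation f x).1 (t * I)‖
    rw [lseries_dilation f (unitInterval.pos_iff_ne_zero.mpr hx)]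
    exact hlow _ (by simpa using Real.log_nonpos x.2.1 x.2.2)
  exact hclosed.closure_subset_iff.mpr hpos (dense_compl_singleton 0 x)

lemma isUnit_of_le_norm_lseries (f : 𝒜) {ε : ℝ} (hε : 0 < ε)
    (hlow : ∀ s : ℂ, 0 ≤ s.re → ε ≤ ‖LSeries f.1 s‖) : IsUnit f := by
  have hdil := le_norm_lseries_dilation f hlow
  have hzero : IsUnit (dilation f 0) := by
    have h1 : f.1 1 ≠ 0 := fun h1 ↦ by
      have hle := hdil 0 0
      rw [dilation_zero, h1, map_zero, ← lseriesHom_apply (by simp), map_zero, norm_zero] at hle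
      exact hle.not_gt hε
    rw [dilation_zero]
    exact (IsUnit.mk0 _ h1).map _
  have hnear (x : unitInterval) : ∀ᶠ y in 𝓝 x, ‖dilation f y - dilation f x‖ < ε :=
    (tendsto_iff_norm_sub_tendsto_zero.mp ((continuous_dilation f).tendsto x)).eventually_lt_const
      hε
  have hclopen : IsClopen {x | IsUnit (dilation f x)} := by
    constructor
    · refine isClosed_iff_frequently.mpr fun x hx ↦ ?_
      obtain ⟨y, hy, hxy⟩ := (hx.and_eventually (hnear x)).exists
      exact isUnit_of_norm_sub_lt hy hε (hdil y) hxy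
    · exact Units.isOpen.preimage (continuous_dilation f)
  have hone : (1 : unitInterval) ∈ {x | IsUnit (dilation f x)} :=
    hclopen.eq_univ ⟨0, hzero⟩ ▸ Set.mem_univ _
  rwa [Set.mem_ofPred_eq, dilation_one] at hone

end summableArithmeticFunction

end

/-- Hewitt–Williamson: an absolutely convergent Dirichlet series `f(s) = ∑ aₙ n^{-s}` with
`a₁ ≠ 0` which is bounded below by `δ > 0` in modulus on `Re s ≥ 0` has an absolutely
convergent Dirichlet series reciprocal there. -/
theorem hewitt_williamson (a : ℕ → ℂ) (δ : ℝ)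
    (ha : Summable fun n : ℕ => ‖a (n + 1)‖) (ha1 : a 1 ≠ 0) (hδ : 0 < δ)
    (hlow : ∀ s : ℂ, 0 ≤ s.re → δ ≤ ‖∑' n : ℕ, a (n + 1) / ((n : ℂ) + 1) ^ s‖) :
    ∃ b : ℕ → ℂ, (Summable fun n : ℕ => ‖b (n + 1)‖) ∧
      ∀ s : ℂ, 0 ≤ s.re →
        (∑' n : ℕ, b (n + 1) / ((n : ℂ) + 1) ^ s) =
          (∑' n : ℕ, a (n + 1) / ((n : ℂ) + 1) ^ s)⁻¹ := by
  let f : summableArithmeticFunction := ⟨toArithmeticFunction a,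
    (summable_nat_add_iff 1).mp (by simpa [toArithmeticFunction] using ha.of_norm)⟩
  have hf (s : ℂ) : LSeries f.1 s = ∑' n : ℕ, a (n + 1) / ((n : ℂ) + 1) ^ s := by
    rw [tsum_div_succ_cpow_eq_lseries]
    exact LSeries_congr (fun {n} hn ↦ if_neg hn) s
  obtain ⟨b, hb⟩ := (summableArithmeticFunction.isUnit_of_le_norm_lseries f hδ fun s hs ↦
    (hlow s hs).trans_eq (congrArg norm (hf s).symm)).exists_right_inv
  refine ⟨b.1, (summable_nat_add_iff 1).mpr (summableArithmeticFunction.summable_norm b),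
    fun s hs ↦ ?_⟩
  rw [tsum_div_succ_cpow_eq_lseries, ← hf]
  refine eq_inv_of_mul_eq_one_right ?_
  simp only [← summableArithmeticFunction.lseriesHom_apply hs, ← map_mul, hb, map_one]
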